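/- Let T and S be invertible measure-preserving transformations of probability spaces (X, μ) and (Y, ν) respectively. If T × T is ergodic with respect to μ ⊗ μ and S is ergodic, then T × S is ergodic with respect to μ ⊗ ν. -/

import Mathlib

open MeasureTheory

/-!
Let `A` be a `T × S`-invariant set with sections `A_x`. Since `A_x = S⁻¹ A_{T x}` and `S` preserves
`ν`, the function `(x, x') ↦ ν (A_x ∆ A_{x'})` is `T × T`-invariant, hence almost everywhere equal
to a constant `δ`. The map `x ↦ A_x` into the measure algebra of `ν` has separable range, so some
ball of radius `δ / 2` contains `A_x` for all `x` in a set `U` of positive measure; as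
`ν (A_x ∆ A_{x'}) < δ` on `U × U` unless `δ = 0`, the constant is `0`. So `A = X × C` modulo null
sets, `C` is `S`-invariant modulo null sets, and ergodicity of `S` makes `C` null or conull.
-/

open Set Filter Function MeasureTheory.Measure
open scoped ENNReal symmDiff Topology

section IsometricCoefficients

variable {X Z : Type*} [MeasurableSpace X] {μ : Measure X} [PseudoEMetricSpace Z] {f : X → Z}

lemma exists_measure_preimage_eball_pos (hμ : μ ≠ 0)
    (hf : TopologicalSpace.IsSeparable (range f)) {ε : ℝ≥0∞} (hε : 0 < ε) :
    ∃ z, 0 < μ (f ⁻¹' Metric.eball z ε) := by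
  obtain ⟨c, hc, hfc⟩ := hf
  have hcover : ⋃ z ∈ c, f ⁻¹' Metric.eball z ε = univ := by
    refine eq_univ_of_forall fun x ↦ ?_
    obtain ⟨z, hz, hxz⟩ := EMetric.mem_closure_iff.1 (hfc (mem_range_self x)) ε hε
    exact mem_biUnion hz hxz
  by_contra! hnull
  have : μ (⋃ z ∈ c, f ⁻¹' Metric.eball z ε) = 0 :=
    (measure_biUnion_null_iff hc).2 fun z _ ↦ nonpos_iff_eq_zero.1 (hnull z)
  rw [hcover, measure_univ_eq_zero] at this
  exact hμ this

lemma ae_edist_eq_zero_of_ae_edist_eq_const [SFinite μ]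
    (hf : TopologicalSpace.IsSeparable (range f)) {δ : ℝ≥0∞}
    (h : ∀ᵐ p ∂μ.prod μ, edist (f p.1) (f p.2) = δ) :
    ∀ᵐ p ∂μ.prod μ, edist (f p.1) (f p.2) = 0 := by
  rcases eq_or_ne μ 0 with rfl | hμ
  · simp
  suffices δ = 0 by rwa [this] at h
  by_contra hδ
  obtain ⟨z, hz⟩ := exists_measure_preimage_eball_pos hμ hf (ENNReal.half_pos hδ)
  set U := f ⁻¹' Metric.eball z (δ / 2)
  have hlt : ∀ p ∈ U ×ˢ U, edist (f p.1) (f p.2) < δ := fun p hp ↦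
    calc edist (f p.1) (f p.2) ≤ edist (f p.1) z + edist (f p.2) z := edist_triangle_right _ _ _
      _ < δ / 2 + δ / 2 := ENNReal.add_lt_add hp.1 hp.2
      _ = δ := ENNReal.add_halves δ
  have hnull : (μ.prod μ) (U ×ˢ U) = 0 :=
    measure_mono_null (fun p hp ↦ (hlt p hp).ne) h
  rw [prod_prod, mul_self_eq_zero] at hnull
  exact hz.ne' hnull

/-- In the literature this property of `T` is called ergodicity with isometric coefficients. -/
lemma exists_ae_edist_eq_zero_of_preErgodic_prodMap_self [SFinite μ] [Nonempty Z] {T : X → X}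
    (hTT : PreErgodic (Prod.map T T) (μ.prod μ)) (hf : StronglyMeasurable f)
    (hinv : ∀ x x', edist (f (T x)) (f (T x')) = edist (f x) (f x')) :
    ∃ z, ∀ᵐ x ∂μ, edist (f x) z = 0 := by
  have hmeas : Measurable fun p : X × X ↦ edist (f p.1) (f p.2) :=
    (continuous_edist.comp_stronglyMeasurable ((hf.comp_measurable measurable_fst).prodMk
      (hf.comp_measurable measurable_snd))).measurable
  obtain ⟨δ, hδ⟩ := hTT.ae_eq_const_of_ae_eq_comp hmeas (funext fun p ↦ hinv p.1 p.2)
  have hzero := ae_edist_eq_zero_of_ae_edist_eq_const hf.isSeparable_range hδ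
  rcases eq_or_ne μ 0 with rfl | hμ
  · simp
  have : NeZero μ := ⟨hμ⟩
  obtain ⟨x₀, hx₀⟩ := (ae_ae_of_ae_prod hzero).exists
  exact ⟨f x₀, hx₀.mono fun x hx ↦ by rwa [edist_comm]⟩

end IsometricCoefficients

section MeasuredSets

variable {Y : Type*} [MeasurableSpace Y] {ν : Measure Y}

lemma measure_symmDiff_symmDiff_le (s t s' t' : Set Y) :
    ν ((s ∆ t) ∆ (s' ∆ t')) ≤ ν (s ∆ s') + ν (t ∆ t') := by
  rw [symmDiff_symmDiff_symmDiff_comm]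
  exact (measure_mono symmDiff_subset_union).trans (measure_union_le _ _)

lemma continuous_measuredSets_symmDiff :
    Continuous (Y := MeasuredSets ν) fun p : MeasuredSets ν × MeasuredSets ν ↦
      ⟨p.1 ∆ p.2, p.1.2.symmDiff p.2.2⟩ := by
  refine LipschitzWith.continuous (K := 2) fun p q ↦ ?_
  calc ν (((p.1 : Set Y) ∆ p.2) ∆ ((q.1 : Set Y) ∆ q.2))
      ≤ edist p.1 q.1 + edist p.2 q.2 := measure_symmDiff_symmDiff_le _ _ _ _
    _ ≤ edist p q + edist p q := add_le_add (le_max_left _ _) (le_max_right _ _)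
    _ = (2 : NNReal) * edist p q := by rw [← two_mul]; rfl

lemma tendsto_measuredSets_of_monotone_of_iUnion_eq [IsFiniteMeasure ν] {s : ℕ → MeasuredSets ν}
    {t : MeasuredSets ν} (hs : Monotone fun n ↦ (s n : Set Y)) (ht : ⋃ n, (s n : Set Y) = t) :
    Tendsto s atTop (𝓝 t) := by
  have hedist : ∀ n, edist (s n) t = ν (t \ s n) := fun n ↦ by
    rw [MeasuredSets.edist_def, symmDiff_of_le]
    exact (subset_iUnion (fun n ↦ (s n : Set Y)) n).trans ht.le
  have hinter : ⋂ n, (t : Set Y) \ s n = ∅ := by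
    rw [← sdiff_iUnion, ht, sdiff_self]
  rw [tendsto_iff_edist_tendsto_0, funext hedist, ← measure_empty (μ := ν), ← hinter]
  exact tendsto_measure_iInter_atTop (fun n ↦ (t.2.diff (s n).2).nullMeasurableSet)
    (fun m n hmn ↦ sdiff_subset_sdiff_right (hs hmn)) ⟨0, measure_ne_top _ _⟩

end MeasuredSets

section Sections

variable {X Y : Type*} [MeasurableSpace X] [MeasurableSpace Y] {ν : Measure Y} {A B : Set (X × Y)}

/-- The section `A_x = {y | (x, y) ∈ A}` of a measurable set `A`, as a point of `MeasuredSets ν`,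
where `edist s t = ν (s ∆ t)`. -/
def measuredSection (ν : Measure Y) (hA : MeasurableSet A) (x : X) : MeasuredSets ν :=
  ⟨Prod.mk x ⁻¹' A, measurable_prodMk_left hA⟩

lemma stronglyMeasurable_measuredSection_prod {s : Set X} {t : Set Y} (hs : MeasurableSet s)
    (ht : MeasurableSet t) : StronglyMeasurable (measuredSection ν (hs.prod ht)) := by
  classical
  have : measuredSection ν (hs.prod ht) =
      fun x ↦ if x ∈ s then (⟨t, ht⟩ : MeasuredSets ν) else ⟨∅, .empty⟩ := by
    ext x : 1
    refine Subtype.ext ?_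
    by_cases hx : x ∈ s <;> simp [measuredSection, hx]
  rw [this]
  exact StronglyMeasurable.ite hs stronglyMeasurable_const stronglyMeasurable_const

lemma stronglyMeasurable_measuredSection_symmDiff {hA : MeasurableSet A} {hB : MeasurableSet B}
    (hsA : StronglyMeasurable (measuredSection ν hA))
    (hsB : StronglyMeasurable (measuredSection ν hB)) :
    StronglyMeasurable (measuredSection ν (hA.symmDiff hB)) :=
  continuous_measuredSets_symmDiff.comp_stronglyMeasurable (hsA.prodMk hsB)

lemma stronglyMeasurable_measuredSection_iUnion [IsFiniteMeasure ν] {A : ℕ → Set (X × Y)}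
    (hdisj : Pairwise (Disjoint on A)) (hA : ∀ n, MeasurableSet (A n))
    (hsA : ∀ n, StronglyMeasurable (measuredSection ν (hA n))) :
    StronglyMeasurable (measuredSection ν (.iUnion hA)) := by
  have hacc : ∀ n, MeasurableSet (accumulate A n) :=
    fun n ↦ .biUnion (to_countable _) fun i _ ↦ hA i
  have hsacc : ∀ n, StronglyMeasurable (measuredSection ν (hacc n)) := by
    intro n
    induction n with
    | zero => convert hsA 0; exact accumulate_zero_nat A
    | succ n ih =>
      convert stronglyMeasurable_measuredSection_symmDiff ih (hsA (n + 1))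
      rw [accumulate_succ]
      exact (disjoint_accumulate hdisj n.lt_succ_self).symmDiff_eq_sup.symm
  refine stronglyMeasurable_of_tendsto atTop hsacc (tendsto_pi_nhds.2 fun x ↦ ?_)
  refine tendsto_measuredSets_of_monotone_of_iUnion_eq
    (fun m n hmn ↦ preimage_mono (f := Prod.mk x) (monotone_accumulate hmn)) ?_
  change ⋃ n, Prod.mk x ⁻¹' accumulate A n = Prod.mk x ⁻¹' ⋃ n, A n
  rw [← preimage_iUnion, iUnion_accumulate]

lemma stronglyMeasurable_measuredSection [IsFiniteMeasure ν] (hA : MeasurableSet A) :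
    StronglyMeasurable (measuredSection ν hA) := by
  induction A, hA using MeasurableSpace.induction_on_inter generateFrom_prod.symm
    isPiSystem_prod with
  | empty =>
    convert stronglyMeasurable_measuredSection_prod (X := X) (Y := Y) .empty .empty
    exact prod_empty.symm
  | basic A hA =>
    obtain ⟨s, hs, t, ht, rfl⟩ := hA
    exact stronglyMeasurable_measuredSection_prod hs ht
  | compl A hA ih =>
    have huniv : StronglyMeasurable (measuredSection ν (MeasurableSet.univ (α := X × Y))) := by
      convert stronglyMeasurable_measuredSection_prod (X := X) (Y := Y) .univ .univ
      exact univ_prod_univ.symm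
    convert stronglyMeasurable_measuredSection_symmDiff huniv ih
    exact (top_symmDiff A).symm
  | iUnion A hdisj hA ih => exact stronglyMeasurable_measuredSection_iUnion hdisj hA ih

lemma eventuallyConst_prod_of_ae_section_ae_eq {μ : Measure X} [SFinite ν]
    (hA : MeasurableSet A) {C : Set Y} (hC : EventuallyConst C (ae ν))
    (hAC : ∀ᵐ x ∂μ, Prod.mk x ⁻¹' A =ᵐ[ν] C) : EventuallyConst A (ae (μ.prod ν)) := by
  rw [eventuallyConst_set'] at hC ⊢
  refine hC.imp (fun h ↦ ?_) fun h ↦ ?_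
  · rw [ae_eq_empty, measure_prod_null hA]
    exact hAC.mono fun x hx ↦ ae_eq_empty.1 (hx.trans h)
  · rw [ae_eq_univ, measure_prod_null hA.compl]
    exact hAC.mono fun x hx ↦ ae_eq_univ.1 (hx.trans h)

end Sections

section ProductMaps

variable {X Y : Type*} {T : X → X} {S : Y → Y} {A : Set (X × Y)}

lemma preimage_section_of_preimage_prodMap_eq (hinv : Prod.map T S ⁻¹' A = A) (x : X) :
    S ⁻¹' (Prod.mk (T x) ⁻¹' A) = Prod.mk x ⁻¹' A := by
  conv_rhs => rw [← hinv]
  rfl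

variable [MeasurableSpace X] [MeasurableSpace Y] {μ : Measure X} {ν : Measure Y}

lemma edist_measuredSection_of_preimage_prodMap_eq (hS : MeasurePreserving S ν ν)
    (hA : MeasurableSet A) (hinv : Prod.map T S ⁻¹' A = A) (x x' : X) :
    edist (measuredSection ν hA (T x)) (measuredSection ν hA (T x')) =
      edist (measuredSection ν hA x) (measuredSection ν hA x') := by
  change ν ((Prod.mk (T x) ⁻¹' A) ∆ (Prod.mk (T x') ⁻¹' A)) =
    ν ((Prod.mk x ⁻¹' A) ∆ (Prod.mk x' ⁻¹' A))
  rw [← hS.measure_preimage ((measurable_prodMk_left hA).symmDiff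
      (measurable_prodMk_left hA)).nullMeasurableSet, preimage_symmDiff,
    preimage_section_of_preimage_prodMap_eq hinv, preimage_section_of_preimage_prodMap_eq hinv]

lemma exists_ae_section_ae_eq_of_preimage_prodMap_eq [SFinite μ] [IsFiniteMeasure ν]
    (hTT : PreErgodic (Prod.map T T) (μ.prod μ)) (hS : MeasurePreserving S ν ν)
    (hA : MeasurableSet A) (hinv : Prod.map T S ⁻¹' A = A) :
    ∃ C, MeasurableSet C ∧ ∀ᵐ x ∂μ, Prod.mk x ⁻¹' A =ᵐ[ν] C := by
  have : Nonempty (MeasuredSets ν) := ⟨⟨∅, .empty⟩⟩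
  obtain ⟨C, hC⟩ := exists_ae_edist_eq_zero_of_preErgodic_prodMap_self hTT
    (stronglyMeasurable_measuredSection hA)
    (edist_measuredSection_of_preimage_prodMap_eq hS hA hinv)
  exact ⟨C, C.2, hC.mono fun x hx ↦ measure_symmDiff_eq_zero_iff.1 hx⟩

lemma preimage_ae_eq_of_ae_section_ae_eq [NeZero μ] (hT : QuasiMeasurePreserving T μ μ)
    (hS : QuasiMeasurePreserving S ν ν) (hinv : Prod.map T S ⁻¹' A = A) {C : Set Y}
    (hAC : ∀ᵐ x ∂μ, Prod.mk x ⁻¹' A =ᵐ[ν] C) : S ⁻¹' C =ᵐ[ν] C := by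
  obtain ⟨x, hx, hTx⟩ := (hAC.and (hT.ae hAC)).exists
  rw [← preimage_section_of_preimage_prodMap_eq hinv x] at hx
  exact (hS.preimage_ae_eq hTx).symm.trans hx

theorem stmt5_general [SFinite μ] [IsFiniteMeasure ν] (hT : QuasiMeasurePreserving T μ μ)
    (hTT : PreErgodic (Prod.map T T) (μ.prod μ)) (hS : Ergodic S ν) :
    QuasiErgodic (Prod.map T S) (μ.prod ν) := by
  refine ⟨QuasiMeasurePreserving.prodMap hT hS.quasiMeasurePreserving, ⟨fun A hA hinv ↦ ?_⟩⟩
  rcases eq_or_ne μ 0 with rfl | hμ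
  · simpa only [Measure.zero_prod, ae_zero] using EventuallyConst.bot
  have : NeZero μ := ⟨hμ⟩
  obtain ⟨C, hC, hAC⟩ :=
    exists_ae_section_ae_eq_of_preimage_prodMap_eq hTT hS.toMeasurePreserving hA hinv
  have hSC : S ⁻¹' C =ᵐ[ν] C :=
    preimage_ae_eq_of_ae_section_ae_eq hT hS.quasiMeasurePreserving hinv hAC
  have hCconst : EventuallyConst C (ae ν) :=
    hS.quasiErgodic.aeconst_set₀ hC.nullMeasurableSet hSC
  exact eventuallyConst_prod_of_ae_section_ae_eq hA hCconst hAC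

end ProductMaps

/-- If `T` and `S` are invertible measure-preserving transformations of probability
spaces `(X, μ)` and `(Y, ν)`, `T × T` is ergodic with respect to `μ ⊗ μ`, and `S` is
ergodic, then `T × S` is ergodic with respect to `μ ⊗ ν`. -/
theorem stmt5 {X Y : Type*} [MeasurableSpace X] [MeasurableSpace Y]
    (μ : Measure X) (ν : Measure Y) [IsProbabilityMeasure μ] [IsProbabilityMeasure ν]
    (T : X → X) (S : Y → Y)
    (hTbij : Function.Bijective T) (hSbij : Function.Bijective S)
    (hT : MeasurePreserving T μ μ) (hS : MeasurePreserving S ν ν)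
    (hTT : Ergodic (Prod.map T T) (μ.prod μ)) (hSerg : Ergodic S ν) :
    Ergodic (Prod.map T S) (μ.prod ν) :=
  ⟨hT.prod hS, (stmt5_general hT.quasiMeasurePreserving hTT.toPreErgodic hSerg).toPreErgodic⟩
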